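/- Communication-rate converse bound: under the converse setup, log|𝒲| ≥ Σ_{i=1}^n I(U_i; X̃_i | Y_i). -/

import Mathlib

open MeasureTheory

noncomputable section

/-- Probability mass `P[X = x]` of a finitely-valued random variable `X` on `(Ω, μ)`. -/
def pmass {Ω : Type*} [MeasurableSpace Ω] (μ : Measure Ω) {α : Type*}
    (X : Ω → α) (x : α) : ℝ :=
  (μ (X ⁻¹' {x})).toReal

/-- Shannon entropy `H(X)` (in nats) of a finitely-valued random variable. -/
def entropyRV {Ω : Type*} [MeasurableSpace Ω] (μ : Measure Ω) {α : Type*} [Fintype α]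
    (X : Ω → α) : ℝ :=
  ∑ x : α, Real.negMulLog (pmass μ X x)

/-- Conditional Shannon entropy `H(X | Y)`. -/
def condEntropyRV {Ω : Type*} [MeasurableSpace Ω] (μ : Measure Ω) {α β : Type*}
    [Fintype α] [Fintype β] (X : Ω → α) (Y : Ω → β) : ℝ :=
  entropyRV μ (fun ω => (X ω, Y ω)) - entropyRV μ Y

/-- Mutual information `I(X;Y)`. -/
def mutualInfoRV {Ω : Type*} [MeasurableSpace Ω] (μ : Measure Ω) {α β : Type*}
    [Fintype α] [Fintype β] (X : Ω → α) (Y : Ω → β) : ℝ :=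
  entropyRV μ X + entropyRV μ Y - entropyRV μ (fun ω => (X ω, Y ω))

/-- Conditional mutual information `I(X;Y|Z)`. -/
def condMutualInfoRV {Ω : Type*} [MeasurableSpace Ω] (μ : Measure Ω) {α β γ : Type*}
    [Fintype α] [Fintype β] [Fintype γ] (X : Ω → α) (Y : Ω → β) (Z : Ω → γ) : ℝ :=
  entropyRV μ (fun ω => (X ω, Z ω)) + entropyRV μ (fun ω => (Y ω, Z ω))
    - entropyRV μ Z - entropyRV μ (fun ω => (X ω, Y ω, Z ω))

/-- Expected value `E[f(X)]` of a function of a finitely-valued random variable. -/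
def expVal {Ω : Type*} [MeasurableSpace Ω] (μ : Measure Ω) {α : Type*} [Fintype α]
    (X : Ω → α) (f : α → ℝ) : ℝ :=
  ∑ a : α, pmass μ X a * f a

/-- Independence of two finitely-valued random variables, via their joint mass. -/
def IndepRV {Ω : Type*} [MeasurableSpace Ω] (μ : Measure Ω) {α β : Type*}
    (X : Ω → α) (Y : Ω → β) : Prop :=
  ∀ a b, pmass μ (fun ω => (X ω, Y ω)) (a, b) = pmass μ X a * pmass μ Y b

/-- Conditional independence of `A` and `C` given `B` (the Markov chain `A − B − C`)
for finitely-valued random variables, via joint masses. -/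
def CondIndepRV {Ω : Type*} [MeasurableSpace Ω] (μ : Measure Ω) {α β γ : Type*}
    (A : Ω → α) (B : Ω → β) (C : Ω → γ) : Prop :=
  ∀ a b c,
    pmass μ (fun ω => (A ω, B ω, C ω)) (a, b, c) * pmass μ B b
      = pmass μ (fun ω => (A ω, B ω)) (a, b) * pmass μ (fun ω => (B ω, C ω)) (b, c)

/-- `X` is uniformly distributed on its (finite) alphabet. -/
def UniformRV {Ω : Type*} [MeasurableSpace Ω] (μ : Measure Ω) {α : Type*} [Fintype α]
    (X : Ω → α) : Prop :=
  ∀ x, pmass μ X x = 1 / (Fintype.card α : ℝ)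

/-- The sequence `S = (S_1, …, S_n)` is i.i.d. with single-letter pmf `p`. -/
def HasIIDLaw {Ω : Type*} [MeasurableSpace Ω] (μ : Measure Ω) {α : Type*} {n : ℕ}
    (S : Ω → Fin n → α) (p : α → ℝ) : Prop :=
  ∀ v : Fin n → α, pmass μ S v = ∏ i, p (v i)

/-- `[a]⁻ = min {a, 0}`. -/
def negPartR (a : ℝ) : ℝ := min a 0

/-!
Follow the entropies `H(W | K, S^{i-1}, Y_i^n)`, where `S_i = (X̃_i, X_i, Y_i, Z_i)` is the `i`-th
letter, as `i` grows. Passing from `i` to `i + 1` replaces the conditioning on `Y_i` by conditioning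
on all of `S_i`. As `S_i` is independent of `B_i = (K, S^{i-1}, Y_{i+1}^n)`, the entropy lost in
that step is exactly `I(W, B_i; S_i | Y_i)`, which dominates `I(U_i; X̃_i | Y_i)` by data
processing. The sum telescopes to `H(W | K, Y^n) - H(W | K, S^n) ≤ log |𝒲|`.
-/

section Mass

variable {Ω α β : Type*} [MeasurableSpace Ω] {μ : Measure Ω} {X : Ω → α} {Y : Ω → β}

lemma pmass_nonneg (a : α) : 0 ≤ pmass μ X a :=
  ENNReal.toReal_nonneg

lemma pmass_le_pmass_comp [IsFiniteMeasure μ] (g : α → β) (a : α) :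
    pmass μ X a ≤ pmass μ (fun ω => g (X ω)) (g a) :=
  measureReal_mono fun _ hω => congrArg g hω

lemma pmass_comp_pos [IsFiniteMeasure μ] (g : α → β) {a : α} (ha : 0 < pmass μ X a) :
    0 < pmass μ (fun ω => g (X ω)) (g a) :=
  ha.trans_le (pmass_le_pmass_comp g a)

variable [Fintype α] [MeasurableSpace α] [MeasurableSingletonClass α]

lemma pmass_comp [IsFiniteMeasure μ] [DecidableEq β] (hX : Measurable X) (g : α → β) (b : β) :
    pmass μ (fun ω => g (X ω)) b = ∑ a with g a = b, pmass μ X a := by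
  have hpre : (fun ω => g (X ω)) ⁻¹' {b} = X ⁻¹' ↑(Finset.univ.filter (g · = b)) := by
    ext ω
    simp
  exact (congrArg μ.real hpre).trans
    (sum_measureReal_preimage_singleton _ fun a _ => hX (measurableSet_singleton a)).symm

lemma sum_pmass [IsProbabilityMeasure μ] (hX : Measurable X) : ∑ a, pmass μ X a = 1 := by
  have h := pmass_comp (μ := μ) hX (fun _ => ()) ()
  simpa [pmass] using h.symm

lemma sum_pmass_prodMk_left [IsFiniteMeasure μ] (hX : Measurable X) (Y : Ω → β) (b : β) :
    ∑ a, pmass μ (fun ω => (X ω, Y ω)) (a, b) = pmass μ Y b := by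
  have hfiber (a : α) :
      pmass μ (fun ω => (X ω, Y ω)) (a, b) = (μ.restrict (Y ⁻¹' {b})).real (X ⁻¹' {a}) := by
    rw [measureReal_restrict_apply (hX (measurableSet_singleton a)), ← Set.mk_preimage_prod,
      Set.singleton_prod_singleton]
    rfl
  simp only [hfiber]
  rw [sum_measureReal_preimage_singleton _ fun a _ => hX (measurableSet_singleton a),
    Finset.coe_univ, Set.preimage_univ, measureReal_restrict_apply_univ]
  rfl

lemma sum_pmass_prodMk_right [IsFiniteMeasure μ] (hX : Measurable X) (Y : Ω → β) (b : β) :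
    ∑ a, pmass μ (fun ω => (Y ω, X ω)) (b, a) = pmass μ Y b := by
  have hswap (a : α) :
      pmass μ (fun ω => (Y ω, X ω)) (b, a) = pmass μ (fun ω => (X ω, Y ω)) (a, b) := by
    refine congrArg (fun A => (μ A).toReal) (Set.ext fun ω => ?_)
    simp only [Set.mem_preimage, Set.mem_singleton_iff, Prod.mk.injEq, and_comm]
  simp only [hswap, sum_pmass_prodMk_left hX]

end Mass

section Expectation

variable {Ω α β : Type*} [MeasurableSpace Ω] {μ : Measure Ω} {X : Ω → α} [Fintype α]

lemma expVal_congr {f g : α → ℝ} (h : ∀ a, 0 < pmass μ X a → f a = g a) :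
    expVal μ X f = expVal μ X g := by
  refine Finset.sum_congr rfl fun a _ => ?_
  rcases (pmass_nonneg (μ := μ) (X := X) a).eq_or_lt with h0 | hpos
  · rw [← h0, zero_mul, zero_mul]
  · rw [h a hpos]

lemma expVal_add (f g : α → ℝ) :
    expVal μ X (fun a => f a + g a) = expVal μ X f + expVal μ X g := by
  simp only [expVal, mul_add, Finset.sum_add_distrib]

lemma expVal_sub (f g : α → ℝ) :
    expVal μ X (fun a => f a - g a) = expVal μ X f - expVal μ X g := by
  simp only [expVal, mul_sub, Finset.sum_sub_distrib]

variable [MeasurableSpace α] [MeasurableSingletonClass α]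

lemma expVal_const [IsProbabilityMeasure μ] (hX : Measurable X) (c : ℝ) :
    expVal μ X (fun _ => c) = c := by
  rw [expVal, ← Finset.sum_mul, sum_pmass hX, one_mul]

lemma expVal_comp [IsFiniteMeasure μ] [Fintype β] (hX : Measurable X) (g : α → β) (f : β → ℝ) :
    expVal μ (fun ω => g (X ω)) f = expVal μ X (fun a => f (g a)) := by
  classical
  simp only [expVal, pmass_comp hX, Finset.sum_mul]
  rw [← Finset.sum_fiberwise Finset.univ g]
  refine Finset.sum_congr rfl fun b _ => Finset.sum_congr rfl fun a ha => ?_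
  rw [(Finset.mem_filter.1 ha).2]

end Expectation

section Entropy

variable {Ω α β γ : Type*} [MeasurableSpace Ω] {μ : Measure Ω}
  [Fintype α] [Fintype β] [Fintype γ]
  {X : Ω → α} {Y : Ω → β} {Z : Ω → γ}

lemma entropyRV_eq_neg_expVal_log :
    entropyRV μ X = -expVal μ X (fun a => Real.log (pmass μ X a)) := by
  simp only [entropyRV, expVal, Real.negMulLog, neg_mul, Finset.sum_neg_distrib]

variable [MeasurableSpace α] [MeasurableSingletonClass α]

lemma entropyRV_comp [IsFiniteMeasure μ] (hX : Measurable X) (g : α → β) :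
    entropyRV μ (fun ω => g (X ω)) =
      -expVal μ X (fun a => Real.log (pmass μ (fun ω => g (X ω)) (g a))) := by
  rw [entropyRV_eq_neg_expVal_log, expVal_comp hX]

lemma entropyRV_comp_le [IsFiniteMeasure μ] (hX : Measurable X) (g : α → β) :
    entropyRV μ (fun ω => g (X ω)) ≤ entropyRV μ X := by
  rw [entropyRV_comp hX, entropyRV_eq_neg_expVal_log, neg_le_neg_iff]
  refine Finset.sum_le_sum fun a _ => ?_
  rcases (pmass_nonneg (μ := μ) (X := X) a).eq_or_lt with h0 | hpos
  · rw [← h0, zero_mul, zero_mul]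
  · exact mul_le_mul_of_nonneg_left (Real.log_le_log hpos (pmass_le_pmass_comp g a)) hpos.le

variable [IsProbabilityMeasure μ]

lemma entropyRV_le_of_factorsThrough (hX : Measurable X) (h : Y.FactorsThrough X) :
    entropyRV μ Y ≤ entropyRV μ X := by
  have : Nonempty β := (nonempty_of_isProbabilityMeasure μ).map Y
  obtain ⟨g, rfl⟩ := (Function.factorsThrough_iff Y).1 h
  exact entropyRV_comp_le hX g

lemma entropyRV_congr (hX : Measurable X) (h : ∀ ω ω', X ω = X ω' ↔ Y ω = Y ω') :
    entropyRV μ X = entropyRV μ Y := by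
  have : Nonempty β := (nonempty_of_isProbabilityMeasure μ).map Y
  obtain ⟨g, hg⟩ := (Function.factorsThrough_iff Y).1 fun ω ω' => (h ω ω').1
  let : MeasurableSpace β := ⊤
  have hY : Measurable Y := hg ▸ (Measurable.of_discrete (f := g)).comp hX
  exact le_antisymm (entropyRV_le_of_factorsThrough hY fun ω ω' => (h ω ω').2)
    (entropyRV_le_of_factorsThrough hX fun ω ω' => (h ω ω').1)

lemma entropyRV_le_neg_expVal_log (hX : Measurable X) {q : α → ℝ} (hq : ∀ a, 0 ≤ q a)
    (hsupp : ∀ a, 0 < pmass μ X a → 0 < q a) (hsum : ∑ a, q a ≤ 1) :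
    entropyRV μ X ≤ -expVal μ X (fun a => Real.log (q a)) := by
  have hterm : ∀ a, Real.negMulLog (pmass μ X a) ≤
      -(pmass μ X a * Real.log (q a)) + (q a - pmass μ X a) := fun a => by
    rcases (pmass_nonneg (μ := μ) (X := X) a).eq_or_lt with h0 | hpos
    · simpa [← h0] using hq a
    have hlog := Real.log_le_sub_one_of_pos (div_pos (hsupp a hpos) hpos)
    rw [Real.log_div (hsupp a hpos).ne' hpos.ne'] at hlog
    have hmul := mul_le_mul_of_nonneg_left hlog hpos.le
    rw [mul_sub, mul_sub, mul_one, mul_div_cancel₀ _ hpos.ne'] at hmul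
    rw [Real.negMulLog]
    linarith
  calc entropyRV μ X
      ≤ ∑ a, (-(pmass μ X a * Real.log (q a)) + (q a - pmass μ X a)) :=
        Finset.sum_le_sum fun a _ => hterm a
    _ = -expVal μ X (fun a => Real.log (q a)) + (∑ a, q a - 1) := by
        rw [Finset.sum_add_distrib, Finset.sum_neg_distrib, Finset.sum_sub_distrib, sum_pmass hX,
          expVal]
    _ ≤ -expVal μ X (fun a => Real.log (q a)) := by linarith

lemma condEntropyRV_nonneg [MeasurableSpace β] [MeasurableSingletonClass β]
    (hX : Measurable X) (hY : Measurable Y) : 0 ≤ condEntropyRV μ X Y :=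
  sub_nonneg.2 <| entropyRV_le_of_factorsThrough (hX.prodMk hY) fun _ _ h => congrArg Prod.snd h

lemma condEntropyRV_congr_right [MeasurableSpace β] [MeasurableSingletonClass β]
    (hX : Measurable X) (hY : Measurable Y) (h : ∀ ω ω', Y ω = Y ω' ↔ Z ω = Z ω') :
    condEntropyRV μ X Y = condEntropyRV μ X Z := by
  have hjoint : entropyRV μ (fun ω => (X ω, Y ω)) = entropyRV μ (fun ω => (X ω, Z ω)) :=
    entropyRV_congr (hX.prodMk hY) fun ω ω' => by simp only [Prod.mk.injEq, h ω ω']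
  rw [condEntropyRV, condEntropyRV, entropyRV_congr hY h, hjoint]

lemma condEntropyRV_le_log_card [MeasurableSpace β] [MeasurableSingletonClass β]
    (hX : Measurable X) (hY : Measurable Y) :
    condEntropyRV μ X Y ≤ Real.log (Fintype.card α) := by
  have : Nonempty α := (nonempty_of_isProbabilityMeasure μ).map X
  have hcard : (0 : ℝ) < Fintype.card α := Nat.cast_pos.2 Fintype.card_pos
  have hXY := hX.prodMk hY
  have hYpos {a : α × β} (ha : 0 < pmass μ (fun ω => (X ω, Y ω)) a) : 0 < pmass μ Y a.2 :=
    pmass_comp_pos Prod.snd ha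
  have hgibbs := entropyRV_le_neg_expVal_log hXY
    (q := fun a => pmass μ Y a.2 / Fintype.card α)
    (fun a => div_nonneg (pmass_nonneg _) hcard.le) (fun a ha => div_pos (hYpos ha) hcard)
    (by simp [Fintype.sum_prod_type, ← Finset.sum_div, sum_pmass hY, hcard.ne'])
  have hsplit := expVal_congr (X := fun ω => (X ω, Y ω)) fun a ha =>
    Real.log_div (hYpos ha).ne' hcard.ne'
  rw [hsplit, expVal_sub, expVal_const hXY] at hgibbs
  have hHY : entropyRV μ Y = _ := entropyRV_comp hXY Prod.snd
  rw [condEntropyRV]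
  linarith

end Entropy

section MutualInformation

variable {Ω α β γ : Type*} [MeasurableSpace Ω] {μ : Measure Ω}
  [Fintype α] [Fintype β] [Fintype γ]
  [MeasurableSpace α] [MeasurableSingletonClass α]
  [MeasurableSpace β] [MeasurableSingletonClass β]
  [MeasurableSpace γ] [MeasurableSingletonClass γ]
  [IsProbabilityMeasure μ] {X : Ω → α} {Y : Ω → β} {Z : Ω → γ}

lemma sum_pmass_mul_pmass_div_le_one
    (hX : Measurable X) (hY : Measurable Y) (hZ : Measurable Z) :
    ∑ a : α × β × γ, pmass μ (fun ω => (X ω, Z ω)) (a.1, a.2.2) *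
      pmass μ (fun ω => (Y ω, Z ω)) a.2 / pmass μ Z a.2.2 ≤ 1 := by
  calc ∑ a : α × β × γ, pmass μ (fun ω => (X ω, Z ω)) (a.1, a.2.2) *
        pmass μ (fun ω => (Y ω, Z ω)) a.2 / pmass μ Z a.2.2
      = ∑ b : β × γ, pmass μ Z b.2 * pmass μ (fun ω => (Y ω, Z ω)) b / pmass μ Z b.2 := by
        rw [Fintype.sum_prod_type_right]
        simp only [← Finset.sum_div, ← Finset.sum_mul, sum_pmass_prodMk_left hX]
    _ ≤ ∑ b : β × γ, pmass μ (fun ω => (Y ω, Z ω)) b := Finset.sum_le_sum fun b _ => by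
        rw [mul_div_right_comm]
        exact mul_le_of_le_one_left (pmass_nonneg b) (div_self_le_one _)
    _ = 1 := sum_pmass (hY.prodMk hZ)

lemma condMutualInfoRV_nonneg (hX : Measurable X) (hY : Measurable Y) (hZ : Measurable Z) :
    0 ≤ condMutualInfoRV μ X Y Z := by
  have hXYZ := hX.prodMk (hY.prodMk hZ)
  have hXZpos {a} (ha : 0 < pmass μ (fun ω => (X ω, Y ω, Z ω)) a) :
      0 < pmass μ (fun ω => (X ω, Z ω)) (a.1, a.2.2) := pmass_comp_pos (fun a => (a.1, a.2.2)) ha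
  have hYZpos {a} (ha : 0 < pmass μ (fun ω => (X ω, Y ω, Z ω)) a) :
      0 < pmass μ (fun ω => (Y ω, Z ω)) a.2 := pmass_comp_pos Prod.snd ha
  have hZpos {a} (ha : 0 < pmass μ (fun ω => (X ω, Y ω, Z ω)) a) : 0 < pmass μ Z a.2.2 :=
    pmass_comp_pos (fun a => a.2.2) ha
  have hgibbs := entropyRV_le_neg_expVal_log hXYZ
    (fun a => div_nonneg (mul_nonneg (pmass_nonneg _) (pmass_nonneg _)) (pmass_nonneg _))
    (fun a ha => div_pos (mul_pos (hXZpos ha) (hYZpos ha)) (hZpos ha))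
    (sum_pmass_mul_pmass_div_le_one hX hY hZ)
  have hsplit := expVal_congr (X := fun ω => (X ω, Y ω, Z ω)) fun a ha =>
    (Real.log_div (mul_pos (hXZpos ha) (hYZpos ha)).ne' (hZpos ha).ne').trans <|
      congrArg (· - Real.log _) (Real.log_mul (hXZpos ha).ne' (hYZpos ha).ne')
  rw [hsplit, expVal_sub, expVal_add] at hgibbs
  have hHXZ : entropyRV μ (fun ω => (X ω, Z ω)) = _ :=
    entropyRV_comp hXYZ fun a => (a.1, a.2.2)
  have hHYZ : entropyRV μ (fun ω => (Y ω, Z ω)) = _ := entropyRV_comp hXYZ Prod.snd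
  have hHZ : entropyRV μ Z = _ := entropyRV_comp hXYZ fun a => a.2.2
  rw [condMutualInfoRV]
  linarith

lemma condMutualInfoRV_comm (hX : Measurable X) (hY : Measurable Y) (hZ : Measurable Z) :
    condMutualInfoRV μ X Y Z = condMutualInfoRV μ Y X Z := by
  have hswap : entropyRV μ (fun ω => (X ω, Y ω, Z ω)) = entropyRV μ (fun ω => (Y ω, X ω, Z ω)) :=
    entropyRV_congr (hX.prodMk (hY.prodMk hZ)) fun _ _ => by
      simp only [Prod.mk.injEq, and_left_comm]
  rw [condMutualInfoRV, condMutualInfoRV, hswap]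
  ring

variable {α' β' : Type*} [Fintype α'] [MeasurableSpace α'] [MeasurableSingletonClass α']
  [Fintype β'] [MeasurableSpace β'] [MeasurableSingletonClass β'] {X' : Ω → α'} {Y' : Ω → β'}

lemma condMutualInfoRV_le_of_factorsThrough_left (hX' : Measurable X') (hX : Measurable X)
    (hY : Measurable Y) (hZ : Measurable Z) (h : X'.FactorsThrough X) :
    condMutualInfoRV μ X' Y Z ≤ condMutualInfoRV μ X Y Z := by
  -- The difference of the two sides is `I(X; Y | X', Z)`.
  have hdiff := condMutualInfoRV_nonneg (μ := μ) hX hY (hX'.prodMk hZ)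
  have hXZ : entropyRV μ (fun ω => (X ω, Z ω)) = entropyRV μ (fun ω => (X ω, X' ω, Z ω)) :=
    entropyRV_congr (hX.prodMk hZ) fun ω ω' => by
      have := @h ω ω'
      simp only [Prod.mk.injEq]
      tauto
  have hXYZ : entropyRV μ (fun ω => (X ω, Y ω, Z ω)) =
      entropyRV μ (fun ω => (X ω, Y ω, X' ω, Z ω)) :=
    entropyRV_congr (hX.prodMk (hY.prodMk hZ)) fun ω ω' => by
      have := @h ω ω'
      simp only [Prod.mk.injEq]
      tauto
  have hX'YZ : entropyRV μ (fun ω => (X' ω, Y ω, Z ω)) =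
      entropyRV μ (fun ω => (Y ω, X' ω, Z ω)) :=
    entropyRV_congr (hX'.prodMk (hY.prodMk hZ)) fun _ _ => by
      simp only [Prod.mk.injEq, and_left_comm]
  rw [condMutualInfoRV] at hdiff ⊢
  rw [condMutualInfoRV, hXZ, hXYZ, hX'YZ]
  linarith

lemma condMutualInfoRV_le_of_factorsThrough (hX' : Measurable X') (hY' : Measurable Y')
    (hX : Measurable X) (hY : Measurable Y) (hZ : Measurable Z)
    (hXX' : X'.FactorsThrough X) (hYY' : Y'.FactorsThrough Y) :
    condMutualInfoRV μ X' Y' Z ≤ condMutualInfoRV μ X Y Z :=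
  calc condMutualInfoRV μ X' Y' Z
      ≤ condMutualInfoRV μ X Y' Z :=
        condMutualInfoRV_le_of_factorsThrough_left hX' hX hY' hZ hXX'
    _ = condMutualInfoRV μ Y' X Z := condMutualInfoRV_comm hX hY' hZ
    _ ≤ condMutualInfoRV μ Y X Z :=
        condMutualInfoRV_le_of_factorsThrough_left hY' hY hX hZ hYY'
    _ = condMutualInfoRV μ X Y Z := condMutualInfoRV_comm hY hX hZ

end MutualInformation

section Independence

variable {Ω α β : Type*} [MeasurableSpace Ω] {μ : Measure Ω}
  [MeasurableSpace α] [MeasurableSingletonClass α]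
  [MeasurableSpace β] [MeasurableSingletonClass β]
  {X : Ω → α} {Y : Ω → β}

lemma indepRV_of_pmass_eq_mul [IsProbabilityMeasure μ] [Finite α] [Finite β]
    (hX : Measurable X) (hY : Measurable Y)
    (f : α → ℝ) (g : β → ℝ) (h : ∀ a b, pmass μ (fun ω => (X ω, Y ω)) (a, b) = f a * g b) :
    IndepRV μ X Y := by
  cases nonempty_fintype α
  cases nonempty_fintype β
  intro a b
  have hXmass (a : α) : pmass μ X a = f a * ∑ b, g b := by
    simp only [← sum_pmass_prodMk_right hY X, h, Finset.mul_sum]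
  have hYmass : pmass μ Y b = (∑ a, f a) * g b := by
    simp only [← sum_pmass_prodMk_left hX Y, h, Finset.sum_mul]
  have htotal : (∑ a, f a) * ∑ b, g b = 1 := by
    rw [← sum_pmass (μ := μ) hX, Finset.sum_mul]
    simp only [hXmass]
  rw [h, hXmass, hYmass]
  linear_combination -(f a * g b) * htotal

lemma IndepRV.comp [IsFiniteMeasure μ] [Finite α] [Finite β] {α' β' : Type*}
    (h : IndepRV μ X Y) (hX : Measurable X) (hY : Measurable Y) (f : α → α') (g : β → β') :
    IndepRV μ (fun ω => f (X ω)) (fun ω => g (Y ω)) := by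
  classical
  cases nonempty_fintype α
  cases nonempty_fintype β
  intro a b
  rw [pmass_comp hX, pmass_comp hY, Finset.sum_mul_sum, ← Finset.sum_product',
    pmass_comp (hX.prodMk hY) (fun c => (f c.1, g c.2))]
  exact Finset.sum_congr (by ext; simp) fun c _ => h c.1 c.2

lemma IndepRV.prodMk_ne_eval {ι δ : Type*} [IsProbabilityMeasure μ] [Finite α] [Fintype ι]
    [Finite δ] [MeasurableSpace δ] [MeasurableSingletonClass δ] {S : Ω → ι → δ}
    (h : IndepRV μ X S) (hX : Measurable X) (hS : Measurable S) (p : ι → δ → ℝ)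
    (hlaw : ∀ v, pmass μ S v = ∏ j, p j (v j)) (i : ι) :
    IndepRV μ (fun ω => (X ω, fun j : {j // j ≠ i} => S ω j)) (fun ω => S ω i) := by
  classical
  refine indepRV_of_pmass_eq_mul (by fun_prop) (by fun_prop)
    (fun a => pmass μ X a.1 * ∏ j : {j // j ≠ i}, p j (a.2 j)) (p i) ?_
  rintro ⟨x, t⟩ s
  let v : ι → δ := (Equiv.funSplitAt i δ).symm (s, t)
  have hmass : pmass μ (fun ω => ((X ω, fun j : {j // j ≠ i} => S ω j), S ω i)) ((x, t), s) =
      pmass μ (fun ω => (X ω, S ω)) (x, v) := by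
    refine congrArg (fun A => (μ A).toReal) (Set.ext fun ω => ?_)
    simp only [Set.mem_preimage, Set.mem_singleton_iff, Prod.mk.injEq, v, Equiv.eq_symm_apply,
      Equiv.funSplitAt_apply, and_assoc, and_comm (a := S ω i = s)]
  have hvi : v i = s := by simp [v]
  have hvne (j : {j // j ≠ i}) : v j = t j := by simp [v, j.2]
  rw [hmass, h x v, hlaw v, Fintype.prod_eq_mul_prod_subtype_ne _ i]
  simp only [hvi, hvne]
  ring

variable [Fintype α] [Fintype β]

lemma IndepRV.entropyRV_prodMk [IsFiniteMeasure μ] (h : IndepRV μ X Y)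
    (hX : Measurable X) (hY : Measurable Y) :
    entropyRV μ (fun ω => (X ω, Y ω)) = entropyRV μ X + entropyRV μ Y := by
  have hXY := hX.prodMk hY
  have hlog : expVal μ (fun ω => (X ω, Y ω))
      (fun a => Real.log (pmass μ (fun ω => (X ω, Y ω)) a)) =
      expVal μ (fun ω => (X ω, Y ω))
        (fun a => Real.log (pmass μ X a.1) + Real.log (pmass μ Y a.2)) :=
    expVal_congr fun a ha => by
      rw [h a.1 a.2, Real.log_mul (pmass_comp_pos Prod.fst ha).ne' (pmass_comp_pos Prod.snd ha).ne']
  have hHX : entropyRV μ X = _ := entropyRV_comp hXY Prod.fst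
  have hHY : entropyRV μ Y = _ := entropyRV_comp hXY Prod.snd
  rw [entropyRV_eq_neg_expVal_log, hlog, expVal_add, hHX, hHY]
  ring

lemma IndepRV.condMutualInfoRV_prodMk_eq_sub {γ δ : Type*} [IsProbabilityMeasure μ]
    [Fintype γ] [MeasurableSpace γ] [MeasurableSingletonClass γ]
    [Fintype δ] [MeasurableSpace δ] [MeasurableSingletonClass δ] {W : Ω → γ}
    (h : IndepRV μ X Y) (hW : Measurable W) (hX : Measurable X) (hY : Measurable Y) (η : β → δ) :
    condMutualInfoRV μ (fun ω => (W ω, X ω)) Y (fun ω => η (Y ω)) =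
      condEntropyRV μ W (fun ω => (X ω, η (Y ω))) - condEntropyRV μ W (fun ω => (X ω, Y ω)) := by
  have hη : Measurable fun ω => η (Y ω) := Measurable.of_discrete.comp hY
  have hXY := h.entropyRV_prodMk hX hY
  have hXη := (h.comp hX hY id η).entropyRV_prodMk hX hη
  have hassoc : entropyRV μ (fun ω => ((W ω, X ω), η (Y ω))) =
      entropyRV μ (fun ω => (W ω, X ω, η (Y ω))) :=
    entropyRV_congr ((hW.prodMk hX).prodMk hη) fun _ _ => by simp only [Prod.mk.injEq, and_assoc]
  have hYη : entropyRV μ Y = entropyRV μ (fun ω => (Y ω, η (Y ω))) :=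
    entropyRV_congr hY fun ω ω' => by
      simp only [Prod.mk.injEq, iff_self_and]
      exact congrArg η
  have hWXY : entropyRV μ (fun ω => (W ω, X ω, Y ω)) =
      entropyRV μ (fun ω => ((W ω, X ω), Y ω, η (Y ω))) :=
    entropyRV_congr (hW.prodMk (hX.prodMk hY)) fun ω ω' => by
      have := congrArg η (a₁ := Y ω) (a₂ := Y ω')
      simp only [Prod.mk.injEq]
      tauto
  simp only [id] at hXη
  rw [condMutualInfoRV, condEntropyRV, condEntropyRV, hassoc, ← hYη, ← hWXY, hXY, hXη]
  ring

end Independence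

section Blocks

variable {Ω α γ δ ε : Type*} {n : ℕ}

/-- The block `s^{i-1}` of letters of index `< i`; indices start at `0`. -/
def blockBefore (i : ℕ) (s : Fin n → δ) : {j : Fin n // j.1 < i} → δ := fun j => s j

/-- The block `s_i^n` of letters of index `≥ i`; indices start at `0`. -/
def blockFrom (i : ℕ) (s : Fin n → δ) : {j : Fin n // i ≤ j.1} → δ := fun j => s j

lemma blockBefore_eq_iff {i : ℕ} {s t : Fin n → δ} :
    blockBefore i s = blockBefore i t ↔ ∀ j : Fin n, j.1 < i → s j = t j := by
  simp only [blockBefore, funext_iff, Subtype.forall]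

lemma blockFrom_eq_iff {i : ℕ} {s t : Fin n → δ} :
    blockFrom i s = blockFrom i t ↔ ∀ j : Fin n, i ≤ j.1 → s j = t j := by
  simp only [blockFrom, funext_iff, Subtype.forall]

lemma blockBefore_succ_eq_iff (i : Fin n) {s t : Fin n → δ} :
    blockBefore (i + 1) s = blockBefore (i + 1) t ↔
      blockBefore i s = blockBefore i t ∧ s i = t i := by
  simp only [blockBefore_eq_iff]
  refine ⟨fun h => ⟨fun j hj => h j (hj.trans (Nat.lt_succ_self _)), h i (Nat.lt_succ_self _)⟩,
    fun h j hj => ?_⟩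
  rcases Nat.lt_succ_iff_lt_or_eq.1 hj with hlt | heq
  · exact h.1 j hlt
  · rw [Fin.ext heq, h.2]

lemma blockFrom_eq_iff_succ (i : Fin n) {s t : Fin n → δ} :
    blockFrom i s = blockFrom i t ↔ blockFrom (i + 1) s = blockFrom (i + 1) t ∧ s i = t i := by
  simp only [blockFrom_eq_iff]
  refine ⟨fun h => ⟨fun j hj => h j (Nat.le_of_succ_le hj), h i le_rfl⟩, fun h j hj => ?_⟩
  rcases hj.eq_or_lt with heq | hlt
  · rw [← Fin.ext heq, h.2]
  · exact h.1 j hlt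

variable [MeasurableSpace δ]

lemma measurable_blockBefore (i : ℕ) : Measurable (blockBefore i : (Fin n → δ) → _) :=
  measurable_pi_lambda _ fun j => measurable_pi_apply j.1

lemma measurable_blockFrom (i : ℕ) : Measurable (blockFrom i : (Fin n → δ) → _) :=
  measurable_pi_lambda _ fun j => measurable_pi_apply j.1

variable [MeasurableSpace Ω] {μ : Measure Ω} [IsProbabilityMeasure μ]
  [MeasurableSpace α] [MeasurableSingletonClass α] [MeasurableSingletonClass δ]
  {K : Ω → α} {S : Ω → Fin n → δ}

lemma IndepRV.prodMk_blocks_eval [Finite α] [Finite δ] (h : IndepRV μ K S)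
    (hK : Measurable K) (hS : Measurable S) (p : Fin n → δ → ℝ)
    (hlaw : ∀ v, pmass μ S v = ∏ j, p j (v j)) (η : δ → ε) (i : Fin n) :
    IndepRV μ
      (fun ω => (K ω, blockBefore i (S ω), blockFrom (i + 1) (fun j => η (S ω j))))
      (fun ω => S ω i) :=
  (h.prodMk_ne_eval hK hS p hlaw i).comp (by fun_prop) (by fun_prop)
    (fun a => (a.1,
      (fun j : {j : Fin n // j.1 < i} => a.2 ⟨j, Fin.ne_of_lt j.2⟩),
      (fun j : {j : Fin n // i + 1 ≤ j.1} => η (a.2 ⟨j, Fin.ne_of_gt j.2⟩))))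
    id

variable [Fintype α] [Fintype δ] [Fintype γ] [MeasurableSpace γ] [MeasurableSingletonClass γ]
  [Fintype ε] [MeasurableSpace ε] [MeasurableSingletonClass ε] {W : Ω → γ}

lemma condMutualInfoRV_eval_eq_sub (hW : Measurable W) (hK : Measurable K) (hS : Measurable S)
    (h : IndepRV μ K S) (p : Fin n → δ → ℝ) (hlaw : ∀ v, pmass μ S v = ∏ j, p j (v j))
    (η : δ → ε) (i : Fin n) :
    condMutualInfoRV μ
        (fun ω => (W ω, K ω, blockBefore i (S ω), blockFrom (i + 1) (fun j => η (S ω j))))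
        (fun ω => S ω i) (fun ω => η (S ω i)) =
      condEntropyRV μ W
          (fun ω => (K ω, blockBefore i (S ω), blockFrom i (fun j => η (S ω j)))) -
        condEntropyRV μ W
          (fun ω => (K ω, blockBefore (i + 1) (S ω), blockFrom (i + 1) (fun j => η (S ω j)))) := by
  have hSi : Measurable fun ω => S ω i := by fun_prop
  have hηS : Measurable fun ω j => η (S ω j) :=
    (Measurable.of_discrete (f := fun s : Fin n → δ => fun j => η (s j))).comp hS
  have hB : Measurable fun ω =>
      (K ω, blockBefore i (S ω), blockFrom (i + 1) (fun j => η (S ω j))) :=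
    hK.prodMk <| ((measurable_blockBefore i).comp hS).prodMk ((measurable_blockFrom _).comp hηS)
  rw [(h.prodMk_blocks_eval hK hS p hlaw η i).condMutualInfoRV_prodMk_eq_sub hW hB hSi η]
  congr 1
  · refine condEntropyRV_congr_right hW (hB.prodMk ?_) fun ω ω' => ?_
    · exact Measurable.of_discrete.comp hSi
    · simp only [Prod.mk.injEq, blockFrom_eq_iff_succ i, and_assoc]
  · refine condEntropyRV_congr_right hW (hB.prodMk hSi) fun ω ω' => ?_
    simp only [Prod.mk.injEq, blockBefore_succ_eq_iff i]
    tauto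

theorem sum_condMutualInfoRV_eval_eq_sub
    (hW : Measurable W) (hK : Measurable K) (hS : Measurable S)
    (h : IndepRV μ K S) (p : Fin n → δ → ℝ) (hlaw : ∀ v, pmass μ S v = ∏ j, p j (v j))
    (η : δ → ε) :
    ∑ i : Fin n, condMutualInfoRV μ
        (fun ω => (W ω, K ω, blockBefore i (S ω), blockFrom (i + 1) (fun j => η (S ω j))))
        (fun ω => S ω i) (fun ω => η (S ω i)) =
      condEntropyRV μ W (fun ω => (K ω, fun j => η (S ω j))) -
        condEntropyRV μ W (fun ω => (K ω, S ω)) := by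
  let F (i : ℕ) : ℝ := condEntropyRV μ W
    (fun ω => (K ω, blockBefore i (S ω), blockFrom i (fun j => η (S ω j))))
  have hηS : Measurable fun ω j => η (S ω j) :=
    (Measurable.of_discrete (f := fun s : Fin n → δ => fun j => η (s j))).comp hS
  have hF0 : condEntropyRV μ W (fun ω => (K ω, fun j => η (S ω j))) = F 0 :=
    condEntropyRV_congr_right hW (hK.prodMk hηS) fun ω ω' => by
      simp only [Prod.mk.injEq, blockBefore_eq_iff, blockFrom_eq_iff]
      simp [funext_iff]
  have hFn : condEntropyRV μ W (fun ω => (K ω, S ω)) = F n :=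
    condEntropyRV_congr_right hW (hK.prodMk hS) fun ω ω' => by
      simp only [Prod.mk.injEq, blockBefore_eq_iff, blockFrom_eq_iff]
      simp [funext_iff, Nat.not_le_of_lt]
  rw [hF0, hFn, ← Finset.sum_range_sub', ← Fin.sum_univ_eq_sum_range fun i => F i - F (i + 1)]
  exact Finset.sum_congr rfl fun i _ => condMutualInfoRV_eval_eq_sub hW hK hS h p hlaw η i

end Blocks

theorem communication_rate_converse_general
    {Ω 𝒳 𝒳t 𝒴 𝒵 𝒲 𝒦 : Type*}
    [Fintype 𝒳] [Fintype 𝒳t] [Fintype 𝒴] [Fintype 𝒵] [Fintype 𝒲] [Fintype 𝒦]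
    [MeasurableSpace 𝒳] [MeasurableSingletonClass 𝒳]
    [MeasurableSpace 𝒳t] [MeasurableSingletonClass 𝒳t]
    [MeasurableSpace 𝒴] [MeasurableSingletonClass 𝒴]
    [MeasurableSpace 𝒵] [MeasurableSingletonClass 𝒵]
    [MeasurableSpace 𝒲] [MeasurableSingletonClass 𝒲]
    [MeasurableSpace 𝒦] [MeasurableSingletonClass 𝒦]
    [MeasurableSpace Ω] (μ : Measure Ω) [IsProbabilityMeasure μ]
    {n : ℕ} {S : Ω → Fin n → 𝒳t × 𝒳 × 𝒴 × 𝒵} {K : Ω → 𝒦} {W : Ω → 𝒲}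
    (hS : Measurable S) (hK : Measurable K) (hW : Measurable W)
    (p : Fin n → 𝒳t × 𝒳 × 𝒴 × 𝒵 → ℝ) (hlaw : ∀ v, pmass μ S v = ∏ i, p i (v i))
    (hKS : IndepRV μ K S) :
    ∑ i : Fin n,
      condMutualInfoRV μ
        (fun ω => (W ω,
          (fun j : {j : Fin n // i < j} => (S ω j.1).2.2.1),
          (fun j : {j : Fin n // j.1 < i} => (S ω j.1).2.2.2),
          (fun j : {j : Fin n // j.1 < i} => (S ω j.1).2.1),
          K ω))
        (fun ω => (S ω i).1)
        (fun ω => (S ω i).2.2.1) ≤ Real.log (Fintype.card 𝒲) := by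
  have hY : Measurable fun ω j => (S ω j).2.2.1 := by fun_prop
  calc _ ≤ ∑ i : Fin n, condMutualInfoRV μ
          (fun ω => (W ω, K ω, blockBefore i (S ω), blockFrom (i + 1) (fun j => (S ω j).2.2.1)))
          (fun ω => S ω i) (fun ω => (S ω i).2.2.1) := by
        refine Finset.sum_le_sum fun i _ => condMutualInfoRV_le_of_factorsThrough
          (by fun_prop) (by fun_prop) ?_ (by fun_prop) (by fun_prop) (fun ω ω' h => ?_)
          fun ω ω' h => congrArg Prod.fst h
        · exact hW.prodMk <| hK.prodMk <|
            ((measurable_blockBefore i).comp hS).prodMk ((measurable_blockFrom _).comp hY)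
        · simp only [Prod.mk.injEq, blockBefore_eq_iff, blockFrom_eq_iff] at h
          obtain ⟨hWeq, hKeq, hbefore, hfrom⟩ := h
          simp only [Prod.mk.injEq, funext_iff, Subtype.forall]
          exact ⟨hWeq, hfrom, fun j hj => by rw [hbefore j hj],
            fun j hj => by rw [hbefore j hj], hKeq⟩
    _ = condEntropyRV μ W (fun ω => (K ω, fun j => (S ω j).2.2.1)) -
          condEntropyRV μ W (fun ω => (K ω, S ω)) :=
        sum_condMutualInfoRV_eval_eq_sub hW hK hS hKS p hlaw fun s => s.2.2.1
    _ ≤ condEntropyRV μ W (fun ω => (K ω, fun j => (S ω j).2.2.1)) :=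
        sub_le_self _ (condEntropyRV_nonneg hW (hK.prodMk hS))
    _ ≤ Real.log (Fintype.card 𝒲) := condEntropyRV_le_log_card hW (hK.prodMk hY)

/-- **Communication-rate converse bound**: under the converse setup (i.i.d. remote
source measurements, uniform private key independent of the source, encoder output
`W = enc(X̃ⁿ, K)`, and auxiliaries `Uᵢ = (W, Y_{i+1}ⁿ, Z^{i−1}, X^{i−1}, K)`),
`log |𝒲| ≥ ∑ᵢ I(Uᵢ; X̃ᵢ | Yᵢ)`. -/
theorem communication_rate_converse
    {𝒳 𝒳t 𝒴 𝒵 𝒲 𝒦 : Type}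
    [Fintype 𝒳] [Fintype 𝒳t] [Fintype 𝒴] [Fintype 𝒵] [Fintype 𝒲] [Fintype 𝒦]
    [MeasurableSpace 𝒳] [DiscreteMeasurableSpace 𝒳]
    [MeasurableSpace 𝒳t] [DiscreteMeasurableSpace 𝒳t]
    [MeasurableSpace 𝒴] [DiscreteMeasurableSpace 𝒴]
    [MeasurableSpace 𝒵] [DiscreteMeasurableSpace 𝒵]
    [MeasurableSpace 𝒲] [DiscreteMeasurableSpace 𝒲]
    [MeasurableSpace 𝒦] [DiscreteMeasurableSpace 𝒦]
    {Ω : Type} [MeasurableSpace Ω] (μ : MeasureTheory.Measure Ω)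
    [MeasureTheory.IsProbabilityMeasure μ]
    {n : ℕ} (S : Ω → Fin n → 𝒳t × 𝒳 × 𝒴 × 𝒵) (K : Ω → 𝒦)
    (hSmeas : Measurable S) (hKmeas : Measurable K)
    (pX : 𝒳 → ℝ) (pXt : 𝒳 → 𝒳t → ℝ) (pYZ : 𝒳 → 𝒴 × 𝒵 → ℝ)
    (hpX0 : ∀ x, 0 ≤ pX x) (hpX1 : ∑ x, pX x = 1)
    (hpXt0 : ∀ x a, 0 ≤ pXt x a) (hpXt1 : ∀ x, ∑ a, pXt x a = 1)
    (hpYZ0 : ∀ x yz, 0 ≤ pYZ x yz) (hpYZ1 : ∀ x, ∑ yz, pYZ x yz = 1)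
    (hiid : HasIIDLaw μ S (fun s => pX s.2.1 * pXt s.2.1 s.1 * pYZ s.2.1 s.2.2))
    (hKunif : UniformRV μ K) (hKind : IndepRV μ K S)
    (enc : (Fin n → 𝒳t) → 𝒦 → 𝒲)
    :
    Real.log (Fintype.card 𝒲 : ℝ) ≥ ∑ i : Fin n,
      condMutualInfoRV μ
        (fun ω => (enc (fun j => (S ω j).1) (K ω),
          (fun j : {j : Fin n // i < j} => (S ω j.1).2.2.1),
          (fun j : {j : Fin n // j.1 < i} => (S ω j.1).2.2.2),
          (fun j : {j : Fin n // j.1 < i} => (S ω j.1).2.1),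
          K ω))
        (fun ω => (S ω i).1)
        (fun ω => (S ω i).2.2.1) := by
  have hW : Measurable fun ω => enc (fun j => (S ω j).1) (K ω) :=
    (Measurable.of_discrete (f := fun v : 𝒦 × (Fin n → 𝒳t × 𝒳 × 𝒴 × 𝒵) =>
      enc (fun j => (v.2 j).1) v.1)).comp (hKmeas.prodMk hSmeas)
  exact communication_rate_converse_general μ hSmeas hKmeas hW
    (fun _ s => pX s.2.1 * pXt s.2.1 s.1 * pYZ s.2.1 s.2.2) hiid hKind
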